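/- Let n ≥ 1 and let c_1, …, c_{2n} ∈ ℂ^{2^n × 2^n} be Majorana operators. Let H = Σ_{(j,k)∈E} w_{jk}(1/4 − n_j n_k) + Σ_{j∈V} μ_j (n_j − 1/2) + Σ_{(j,k)∈E'} w'_{jk}(−a_j† a_k − a_k† a_j) be a traceless classically interacting fermionic Hamiltonian with w_{jk} ≥ 0, w'_{jk} ∈ ℝ, μ_j ∈ ℝ. Then there exists a pure fermionic Gaussian state ρ such that tr(ρ H) ≥ (1/3)·λ_max(H). -/

import Mathlib

open Matrix
open scoped ComplexOrder

noncomputable section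

/-- A family of `2n` Majorana operators on `ℂ^(2^n)`. -/
def IsMajorana (n : ℕ) (c : Fin (2*n) → Matrix (Fin (2^n)) (Fin (2^n)) ℂ) : Prop :=
  (∀ j, (c j).IsHermitian) ∧
  ∀ j k, c j * c k + c k * c j =
    if j = k then (2 : ℂ) • (1 : Matrix (Fin (2^n)) (Fin (2^n)) ℂ) else 0

/-- The first Majorana operator of mode `j` (i.e. `c_{2j-1}` in 1-based indexing). -/
def majA (n : ℕ) (c : Fin (2*n) → Matrix (Fin (2^n)) (Fin (2^n)) ℂ) (j : Fin n) :
    Matrix (Fin (2^n)) (Fin (2^n)) ℂ :=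
  c ⟨2*j, by have := j.isLt; omega⟩

/-- The second Majorana operator of mode `j` (i.e. `c_{2j}` in 1-based indexing). -/
def majB (n : ℕ) (c : Fin (2*n) → Matrix (Fin (2^n)) (Fin (2^n)) ℂ) (j : Fin n) :
    Matrix (Fin (2^n)) (Fin (2^n)) ℂ :=
  c ⟨2*j+1, by have := j.isLt; omega⟩

/-- Annihilation operator `a_j = (c_{2j-1} + i c_{2j})/2`. -/
def ann (n : ℕ) (c : Fin (2*n) → Matrix (Fin (2^n)) (Fin (2^n)) ℂ) (j : Fin n) :
    Matrix (Fin (2^n)) (Fin (2^n)) ℂ :=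
  ((1:ℂ)/2) • (majA n c j + Complex.I • majB n c j)

/-- Number operator `n_j = a_j† a_j`. -/
def num (n : ℕ) (c : Fin (2*n) → Matrix (Fin (2^n)) (Fin (2^n)) ℂ) (j : Fin n) :
    Matrix (Fin (2^n)) (Fin (2^n)) ℂ :=
  (ann n c j)ᴴ * ann n c j

/-- The fermionic Gaussian state `2^{-n} ∏_j (1 + i λ_j c̃_{2j-1} c̃_{2j})`,
where `c̃_i = Σ_k R_{ik} c_k`. -/
def gaussOf (n : ℕ) (c : Fin (2*n) → Matrix (Fin (2^n)) (Fin (2^n)) ℂ)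
    (lam : Fin n → ℝ) (R : Matrix (Fin (2*n)) (Fin (2*n)) ℝ) :
    Matrix (Fin (2^n)) (Fin (2^n)) ℂ :=
  ((2:ℂ)^n)⁻¹ •
    ((List.finRange n).map (fun j =>
      (1 : Matrix (Fin (2^n)) (Fin (2^n)) ℂ) +
        (Complex.I * (lam j : ℂ)) •
          ((∑ k, ((R ⟨2*j, by have := j.isLt; omega⟩ k : ℝ) : ℂ) • c k) *
           (∑ k, ((R ⟨2*j+1, by have := j.isLt; omega⟩ k : ℝ) : ℂ) • c k)))).prod

/-- A (generally mixed) fermionic Gaussian state. -/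
def IsGaussianState (n : ℕ) (c : Fin (2*n) → Matrix (Fin (2^n)) (Fin (2^n)) ℂ)
    (ρ : Matrix (Fin (2^n)) (Fin (2^n)) ℂ) : Prop :=
  ∃ (lam : Fin n → ℝ) (R : Matrix (Fin (2*n)) (Fin (2*n)) ℝ),
    (∀ j, lam j ∈ Set.Icc (-1:ℝ) 1) ∧ R * Rᵀ = 1 ∧ R.det = 1 ∧ ρ = gaussOf n c lam R

/-- A pure fermionic Gaussian state: all `λ_j = ±1`. -/
def IsPureGaussianState (n : ℕ) (c : Fin (2*n) → Matrix (Fin (2^n)) (Fin (2^n)) ℂ)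
    (ρ : Matrix (Fin (2^n)) (Fin (2^n)) ℂ) : Prop :=
  ∃ (lam : Fin n → ℝ) (R : Matrix (Fin (2*n)) (Fin (2*n)) ℝ),
    (∀ j, lam j = 1 ∨ lam j = -1) ∧ R * Rᵀ = 1 ∧ R.det = 1 ∧ ρ = gaussOf n c lam R

/-- The largest (real) eigenvalue of a Hermitian matrix. -/
def lamMax {m : Type} [Fintype m] [DecidableEq m] (M : Matrix m m ℂ) : ℝ :=
  sSup {x : ℝ | (x : ℂ) ∈ spectrum ℂ M}

/-!
`H` is a quadratic polynomial `C` in the commuting mode parities `Z_j = i c_{2j-1} c_{2j}` plus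
`½ ∑_{jk} T_{jk} i c_{2j-1} c_{2k}`, where `T` is symmetric with zero diagonal. With `b` the maximum
of `C` over sign vectors and `K = ∑ |ε_l|` for the eigenvalues `ε` of `T`, the largest eigenvalue of
`H` is at most `b + K / 2`.

The first summand is attained by the Gaussian state of a best sign vector, on which the quadratic
part has expectation `0`. For the second, the energy of a Gaussian state depends on its covariance
matrix `M` only, which ranges over contractions. Take for `M` half of the sign of `T` with its
diagonal removed. Its energy is at least `½ tr (T M) = K / 4`: the classical fields do not see `M`,
and each interaction term contributes `w_{jk} M_{jk}² / 4 ≥ 0`. By Wick's theorem the energy is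
affine in each eigenvalue of `M`, so these can be moved to `±1`, that is to a pure state, without
losing energy. Hence `λ_max(H) ≤ b + K / 2 ≤ 3 max(b, K / 4)`.
-/

open scoped MatrixOrder

section Reflections

variable {ι 𝒜 : Type*}

/-- A vector of signs `±1`: a vertex of the cube `[-1, 1]^ι`, that is, a classical spin
configuration or the spectrum of a pure Gaussian state. -/
def IsSignVector (s : ι → ℝ) : Prop :=
  ∀ j, s j = 1 ∨ s j = -1

theorem IsSignVector.mul_self {s : ι → ℝ} (hs : IsSignVector s) (j : ι) : s j * s j = 1 :=
  mul_self_eq_one_iff.mpr (hs j)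

theorem IsSignVector.update [DecidableEq ι] {s : ι → ℝ} (hs : IsSignVector s) (j : ι) {x : ℝ}
    (hx : x = 1 ∨ x = -1) : IsSignVector (Function.update s j x) := by
  intro k
  obtain rfl | hk := eq_or_ne k j
  · simpa using hx
  · simpa [hk] using hs k

theorem exists_isSignVector_forall_le [Finite ι] (f : (ι → ℝ) → ℝ) :
    ∃ s, IsSignVector s ∧ ∀ t, IsSignVector t → f t ≤ f s := by
  have hfin : {s : ι → ℝ | IsSignVector s}.Finite :=
    (Set.Finite.pi' fun _ => Set.toFinite {1, -1}).subset fun s hs j => hs j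
  exact Set.exists_max_image _ f hfin ⟨1, fun _ => .inl rfl⟩

/-- A commuting family of self-adjoint involutions, such as the mode parities
`i c_{2j-1} c_{2j}`. -/
structure IsReflectionFamily [Ring 𝒜] [StarRing 𝒜] (Z : ι → 𝒜) : Prop where
  isSelfAdjoint : ∀ j, IsSelfAdjoint (Z j)
  mul_self : ∀ j, Z j * Z j = 1
  commute : ∀ j k, Commute (Z j) (Z k)

/-- The product of `1 + s_j Z_j` over a list of indices: for commuting involutions `Z` and signs
`s`, a multiple of the projection onto the joint eigenspace `Z_j = s_j`. -/
def signProd [Ring 𝒜] [Algebra ℝ 𝒜] (Z : ι → 𝒜) (s : ι → ℝ) (L : List ι) : 𝒜 :=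
  (L.map fun j => 1 + s j • Z j).prod

section Algebra

variable [Ring 𝒜] [Algebra ℝ 𝒜]

theorem signProd_cons (Z : ι → 𝒜) (s : ι → ℝ) (j : ι) (L : List ι) :
    signProd Z s (j :: L) = (1 + s j • Z j) * signProd Z s L := by
  simp [signProd]

theorem signProd_cons_update [DecidableEq ι] (Z : ι → 𝒜) (s : ι → ℝ) {j : ι} {L : List ι}
    (hj : j ∉ L) (x : ℝ) :
    signProd Z (Function.update s j x) (j :: L) = (1 + x • Z j) * signProd Z s L := by
  have hL : L.map (fun k => 1 + Function.update s j x k • Z k) = L.map fun k => 1 + s k • Z k :=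
    List.map_congr_left fun k hk => by rw [Function.update_of_ne (ne_of_mem_of_not_mem hk hj)]
  rw [signProd_cons, Function.update_self, signProd, hL, signProd]

theorem commute_signProd {X : 𝒜} {Z : ι → 𝒜} {L : List ι} (hX : ∀ j ∈ L, Commute X (Z j))
    (s : ι → ℝ) : Commute X (signProd Z s L) := by
  refine Commute.list_prod_right _ _ fun Y hY => ?_
  obtain ⟨j, hj, rfl⟩ := List.mem_map.mp hY
  exact (Commute.one_right X).add_right ((hX j hj).smul_right _)

variable [StarRing 𝒜] {Z : ι → 𝒜} {s : ι → ℝ}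

theorem IsReflectionFamily.mul_signProd (hZ : IsReflectionFamily Z) (hs : IsSignVector s)
    {L : List ι} {l : ι} (hl : l ∈ L) : Z l * signProd Z s L = s l • signProd Z s L := by
  induction L with
  | nil => simp at hl
  | cons j L ih =>
    rw [signProd_cons]
    rcases List.mem_cons.mp hl with rfl | hl
    · rw [← mul_assoc, ← smul_mul_assoc]
      simp [mul_add, hZ.mul_self, smul_smul, hs.mul_self, add_comm]
    · have hcomm : Commute (Z l) (1 + s j • Z j) :=
        (Commute.one_right _).add_right ((hZ.commute l j).smul_right _)
      rw [← mul_assoc, hcomm.eq, mul_assoc, ih hl, mul_smul_comm]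

theorem IsReflectionFamily.signProd_mul (hZ : IsReflectionFamily Z) (hs : IsSignVector s)
    {L : List ι} {l : ι} (hl : l ∈ L) : signProd Z s L * Z l = s l • signProd Z s L := by
  rw [← (commute_signProd (fun j _ => hZ.commute l j) s).eq, hZ.mul_signProd hs hl]

end Algebra

section Order

variable [Ring 𝒜] [PartialOrder 𝒜] [Algebra ℝ 𝒜] [PosSMulMono ℝ 𝒜]

/-- `Y` is the average of `(1 + Z_j) Y` and `(1 - Z_j) Y`, so one factor can be split off at a
time. -/
theorem nonneg_of_forall_signProd_mul_nonneg [IsOrderedAddMonoid 𝒜] {Z : ι → 𝒜} {L : List ι}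
    (hL : L.Nodup) {Y : 𝒜} (hY : ∀ s, IsSignVector s → 0 ≤ signProd Z s L * Y) : 0 ≤ Y := by
  classical
  induction L with
  | nil => simpa [signProd] using hY (fun _ => 1) fun _ => .inl rfl
  | cons j L ih =>
    obtain ⟨hj, hL⟩ := List.nodup_cons.mp hL
    refine ih hL fun s hs => ?_
    have hpos := hY _ (hs.update j (.inl rfl))
    have hneg := hY _ (hs.update j (.inr rfl))
    rw [signProd_cons_update Z s hj] at hpos hneg
    have havg : signProd Z s L * Y = (1 / 2 : ℝ) •
        ((1 + (1 : ℝ) • Z j) * signProd Z s L * Y + (1 + (-1 : ℝ) • Z j) * signProd Z s L * Y) := by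
      simp only [add_mul, one_mul, smul_mul_assoc]
      module
    rw [havg]
    exact smul_nonneg (by norm_num) (add_nonneg hpos hneg)

variable [StarRing 𝒜] [StarOrderedRing 𝒜] [StarModule ℝ 𝒜] {Z : ι → 𝒜} {s : ι → ℝ}

/-- Up to a factor `2`, each `1 + s_j Z_j` is a projection commuting with the others. -/
theorem IsReflectionFamily.signProd_nonneg (hZ : IsReflectionFamily Z) (hs : IsSignVector s)
    (L : List ι) : 0 ≤ signProd Z s L := by
  induction L with
  | nil => simp [signProd]
  | cons j L ih =>
    have hsq : (1 + s j • Z j) * (1 + s j • Z j) = (2 : ℝ) • (1 + s j • Z j) := by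
      simp only [mul_add, add_mul, one_mul, mul_one, smul_mul_smul_comm, hZ.mul_self, hs.mul_self]
      module
    have hstar : star (1 + s j • Z j) = 1 + s j • Z j := by
      simp [(hZ.isSelfAdjoint j).star_eq]
    have hcomm : Commute (1 + s j • Z j) (signProd Z s L) :=
      commute_signProd (fun k _ => (Commute.one_left _).add_left ((hZ.commute j k).smul_left _)) s
    have hconj : signProd Z s (j :: L) =
        (1 / 2 : ℝ) • ((1 + s j • Z j) * signProd Z s L * star (1 + s j • Z j)) := by
      rw [hstar, hcomm.eq, mul_assoc, hsq, mul_smul_comm, smul_smul, signProd_cons, hcomm.eq]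
      norm_num
    rw [hconj]
    exact smul_nonneg (by norm_num) (star_right_conjugate_nonneg ih _)

theorem IsReflectionFamily.smul_le_abs_smul_one (hZ : IsReflectionFamily Z) (x : ℝ) (l : ι) :
    x • Z l ≤ |x| • (1 : 𝒜) := by
  have hsign : ∀ y : ℝ, y = 1 ∨ y = -1 → 0 ≤ 1 + y • Z l := fun y hy => by
    simpa [signProd] using hZ.signProd_nonneg (s := fun _ => y) (fun _ => hy) [l]
  rw [← sub_nonneg]
  rcases abs_choice x with hx | hx
  · have hdiff : |x| • (1 : 𝒜) - x • Z l = |x| • (1 + (-1 : ℝ) • Z l) := by rw [hx]; module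
    exact hdiff ▸ smul_nonneg (abs_nonneg x) (hsign _ (.inr rfl))
  · have hdiff : |x| • (1 : 𝒜) - x • Z l = |x| • (1 + (1 : ℝ) • Z l) := by rw [hx]; module
    exact hdiff ▸ smul_nonneg (abs_nonneg x) (hsign _ (.inl rfl))

end Order

section Trace

variable {d : Type*} [Fintype d] [DecidableEq d]

theorem trace_eq_zero_of_mul_eq_neg_mul {X Y : Matrix d d ℂ} (hX : X * X = 1)
    (hXY : X * Y = -(Y * X)) : Y.trace = 0 := by
  refine self_eq_neg.mp ?_
  calc Y.trace = (X * Y * X).trace := by rw [mul_assoc, trace_mul_comm, mul_assoc, hX, mul_one]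
    _ = -Y.trace := by rw [hXY, neg_mul, mul_assoc, hX, mul_one, trace_neg]

theorem trace_signProd {X Z : ι → Matrix d d ℂ} (hX : ∀ j, X j * X j = 1)
    (hXZ : ∀ j, X j * Z j = -(Z j * X j)) (hcomm : ∀ j k, j ≠ k → Commute (X j) (Z k))
    (s : ι → ℝ) {L : List ι} (hL : L.Nodup) : (signProd Z s L).trace = Fintype.card d := by
  induction L with
  | nil => simp [signProd]
  | cons j L ih =>
    obtain ⟨hj, hL⟩ := List.nodup_cons.mp hL
    have hXP : Commute (X j) (signProd Z s L) :=
      commute_signProd (fun k hk => hcomm j k (ne_of_mem_of_not_mem hk hj).symm) s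
    have hzero : (Z j * signProd Z s L).trace = 0 := by
      refine trace_eq_zero_of_mul_eq_neg_mul (hX j) ?_
      rw [← mul_assoc, hXZ, neg_mul, mul_assoc, hXP.eq, mul_assoc]
    rw [signProd_cons, add_mul, one_mul, smul_mul_assoc, trace_add, trace_smul, hzero, smul_zero,
      add_zero, ih hL]

end Trace

end Reflections

theorem lamMax_le {m : Type} [Fintype m] [DecidableEq m] {M : Matrix m m ℂ} {b : ℝ} (hb : 0 ≤ b)
    (hM : M ≤ b • (1 : Matrix m m ℂ)) : lamMax M ≤ b := by
  refine Real.sSup_le (fun x hx => ?_) hb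
  have hx : x ∈ spectrum ℝ M := (spectrum.algebraMap_mem_iff ℂ).mp hx
  have hmem : b - x ∈ spectrum ℝ (b • 1 - M) := by
    rw [← Algebra.algebraMap_eq_smul_one, ← spectrum.singleton_sub_eq]
    exact Set.sub_mem_sub rfl hx
  exact sub_nonneg.mp (spectrum_nonneg_of_nonneg (sub_nonneg.mpr hM) hmem)

theorem exists_vertex_ge_of_convexOn_update {ι : Type*} [Finite ι] [DecidableEq ι] {a b : ι → ℝ}
    {f : (ι → ℝ) → ℝ}
    (hf : ∀ s l, ConvexOn ℝ (Set.Icc (a l) (b l)) fun x => f (Function.update s l x))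
    {s : ι → ℝ} (hs : s ∈ Set.Icc a b) : ∃ t, (∀ j, t j = b j ∨ t j = a j) ∧ f s ≤ f t := by
  have := Fintype.ofFinite ι
  suffices h : ∀ T : Finset ι, ∃ t ∈ Set.Icc a b, (∀ j ∈ T, t j = b j ∨ t j = a j) ∧ f s ≤ f t by
    obtain ⟨t, -, ht, hst⟩ := h Finset.univ
    exact ⟨t, fun j => ht j (Finset.mem_univ j), hst⟩
  intro T
  induction T using Finset.induction_on with
  | empty => exact ⟨s, hs, by simp, le_rfl⟩
  | insert l T hl ih =>
    obtain ⟨t, ht, htT, hst⟩ := ih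
    have hab : a l ≤ b l := (ht.1 l).trans (ht.2 l)
    have hmax := (hf t l).le_max_of_mem_Icc (Set.left_mem_Icc.mpr hab) (Set.right_mem_Icc.mpr hab)
      (z := t l) ⟨ht.1 l, ht.2 l⟩
    simp only [Function.update_eq_self] at hmax
    obtain ⟨x, hx, htx⟩ : ∃ x, (x = b l ∨ x = a l) ∧ f t ≤ f (Function.update t l x) := by
      rcases le_max_iff.mp hmax with h | h
      exacts [⟨_, .inr rfl, h⟩, ⟨_, .inl rfl, h⟩]
    have hxab : x ∈ Set.Icc (a l) (b l) := by rcases hx with rfl | rfl <;> simp [hab]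
    refine ⟨Function.update t l x, ⟨?_, ?_⟩, fun j hj => ?_, hst.trans htx⟩
    · exact le_update_iff.mpr ⟨hxab.1, fun j _ => ht.1 j⟩
    · exact update_le_iff.mpr ⟨hxab.2, fun j _ => ht.2 j⟩
    · obtain rfl | hjl := eq_or_ne j l
      · simpa using hx
      · simpa [hjl] using htT j (Finset.mem_of_mem_insert_of_ne hj hjl)

section CovarianceMatrices

variable {ι : Type*} [DecidableEq ι]

theorem diagonal_le_diagonal_iff {s t : ι → ℝ} : diagonal s ≤ diagonal t ↔ s ≤ t := by
  rw [Matrix.le_iff, diagonal_sub, posSemidef_diagonal_iff]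
  simp [Pi.le_def]

theorem diagonal_mem_Icc_iff {s : ι → ℝ} :
    diagonal s ∈ Set.Icc (-1 : Matrix ι ι ℝ) 1 ↔ s ∈ Set.Icc (-1) 1 := by
  rw [← diagonal_one, diagonal_neg, Set.mem_Icc, diagonal_le_diagonal_iff,
    diagonal_le_diagonal_iff, Set.mem_Icc]
  rfl

theorem diag_mem_Icc {M : Matrix ι ι ℝ} (hM : M ∈ Set.Icc (-1) 1) : M.diag ∈ Set.Icc (-1) 1 := by
  refine ⟨fun j => ?_, fun j => ?_⟩
  · simpa [neg_le_iff_add_nonneg] using (Matrix.le_iff.mp hM.1).diag_nonneg (i := j)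
  · simpa using (Matrix.le_iff.mp hM.2).diag_nonneg (i := j)

variable [Fintype ι]

theorem exists_orthogonal_diagonal {M : Matrix ι ι ℝ} (hM : Mᵀ = M) :
    ∃ (V : Matrix ι ι ℝ) (s : ι → ℝ), V * Vᵀ = 1 ∧ M = V * diagonal s * Vᵀ := by
  have hM : M.IsHermitian := by rwa [Matrix.IsHermitian, conjTranspose_eq_transpose_of_trivial]
  refine ⟨hM.eigenvectorUnitary, hM.eigenvalues, ?_, ?_⟩
  · simpa [star_eq_conjTranspose] using Unitary.coe_mul_star_self hM.eigenvectorUnitary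
  · simpa [Unitary.conjStarAlgAut_apply, star_eq_conjTranspose, Function.comp_def]
      using hM.spectral_theorem

theorem conj_diagonal_apply (V : Matrix ι ι ℝ) (s : ι → ℝ) (j k : ι) :
    (V * diagonal s * Vᵀ) j k = ∑ l, s l * (V j l * V k l) := by
  rw [mul_apply]
  simp only [mul_diagonal, transpose_apply]
  exact Finset.sum_congr rfl fun l _ => by ring

theorem conj_mem_Icc {V M : Matrix ι ι ℝ} (hV : V * Vᵀ = 1) (hM : M ∈ Set.Icc (-1) 1) :
    V * M * Vᵀ ∈ Set.Icc (-1) 1 := by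
  have hlow := star_right_conjugate_le_conjugate hM.1 V
  have hupp := star_right_conjugate_le_conjugate hM.2 V
  rw [star_eq_conjTranspose, conjTranspose_eq_transpose_of_trivial] at hlow hupp
  simpa [hV] using And.intro hlow hupp

theorem conj_diagonal_mem_Icc_iff {V : Matrix ι ι ℝ} (hV : V * Vᵀ = 1) {s : ι → ℝ} :
    V * diagonal s * Vᵀ ∈ Set.Icc (-1) 1 ↔ s ∈ Set.Icc (-1) 1 := by
  refine ⟨fun h => diagonal_mem_Icc_iff.mp ?_,
    fun h => conj_mem_Icc hV (diagonal_mem_Icc_iff.mpr h)⟩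
  have hV' : Vᵀ * V = 1 := mul_eq_one_comm.mp hV
  have hconj := conj_mem_Icc (V := Vᵀ) (by rwa [transpose_transpose]) h
  rwa [transpose_transpose, mul_assoc, mul_assoc, hV', mul_one, ← mul_assoc, hV', one_mul] at hconj

/-- The sign of `T = V diag(ε) Vᵀ` maximizes `tr (T M)` over contractions. Its diagonal can be
removed at the cost of a factor `2`, because the trace against `T` does not see it. -/
theorem exists_contraction_zero_diag {V : Matrix ι ι ℝ} (hV : V * Vᵀ = 1) {ε : ι → ℝ}
    (hdiag : (V * diagonal ε * Vᵀ).diag = 0) :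
    ∃ M : Matrix ι ι ℝ, Mᵀ = M ∧ M ∈ Set.Icc (-1) 1 ∧ M.diag = 0 ∧
      (V * diagonal ε * Vᵀ * M).trace = 1 / 2 * ∑ l, |ε l| := by
  set S := V * diagonal (fun l => (SignType.sign (ε l) : ℝ)) * Vᵀ with hS
  set D := diagonal S.diag with hD
  have hSmem : S ∈ Set.Icc (-1) 1 := by
    refine (conj_diagonal_mem_Icc_iff hV).mpr ⟨fun l => ?_, fun l => ?_⟩ <;>
      rcases lt_trichotomy (ε l) 0 with h | h | h <;> simp [h]
  have hDmem : -D ∈ Set.Icc (-1) 1 := by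
    obtain ⟨h₁, h₂⟩ := diagonal_mem_Icc_iff.mpr (diag_mem_Icc hSmem)
    exact ⟨neg_le_neg h₂, neg_le.mp h₁⟩
  refine ⟨(1 / 2 : ℝ) • S + (1 / 2 : ℝ) • (-D), ?_,
    convex_Icc _ _ hSmem hDmem (by norm_num) (by norm_num) (by norm_num), ?_, ?_⟩
  · simp [hS, hD, mul_assoc]
  · ext j
    simp [hD]
  · have hTS : (V * diagonal ε * Vᵀ * S).trace = ∑ l, |ε l| := by
      have hV' : Vᵀ * V = 1 := mul_eq_one_comm.mp hV
      calc (V * diagonal ε * Vᵀ * S).trace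
          = (V * (diagonal ε * (Vᵀ * V) * diagonal fun l => (SignType.sign (ε l) : ℝ)) *
              Vᵀ).trace := by simp only [hS, mul_assoc]
        _ = ∑ l, |ε l| := by
          rw [hV', mul_one, diagonal_mul_diagonal, trace_mul_comm, ← mul_assoc, hV', one_mul,
            trace_diagonal]
          exact Finset.sum_congr rfl fun l _ => self_mul_sign _
    have hTD : (V * diagonal ε * Vᵀ * D).trace = 0 := by
      refine Finset.sum_eq_zero fun j _ => ?_
      rw [hD, diag_apply, mul_diagonal, ← diag_apply (V * diagonal ε * Vᵀ), hdiag, Pi.zero_apply,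
        zero_mul]
    rw [mul_add, trace_add, mul_smul_comm, mul_smul_comm, trace_smul, trace_smul, mul_neg,
      trace_neg, hTS, hTD]
    simp

end CovarianceMatrices

section Rotations

variable {ι κ μ 𝒜 : Type*} [Fintype κ] [Fintype μ]

/-- The family `X̃_i = ∑_k O_{ik} X_k`. -/
def rotateFamily [AddCommMonoid 𝒜] [Module ℝ 𝒜] (O : Matrix ι κ ℝ) (X : κ → 𝒜) (i : ι) : 𝒜 :=
  ∑ k, O i k • X k

section Module

variable [AddCommMonoid 𝒜] [Module ℝ 𝒜]

theorem rotateFamily_rotateFamily (O : Matrix ι κ ℝ) (P : Matrix κ μ ℝ) (X : μ → 𝒜) :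
    rotateFamily O (rotateFamily P X) = rotateFamily (O * P) X := by
  funext i
  simp only [rotateFamily, mul_apply, Finset.smul_sum, Finset.sum_smul, smul_smul]
  exact Finset.sum_comm

theorem rotateFamily_one [DecidableEq κ] (X : κ → 𝒜) : rotateFamily 1 X = X := by
  funext i
  simp [rotateFamily, one_apply]

theorem rotateFamily_diagonal [DecidableEq κ] (s : κ → ℝ) (X : κ → 𝒜) (i : κ) :
    rotateFamily (diagonal s) X i = s i • X i := by
  simp [rotateFamily, diagonal_apply]

theorem sumElim_rotateFamily (O : Matrix ι κ ℝ) (A B : κ → 𝒜) :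
    Sum.elim (rotateFamily O A) (rotateFamily O B) =
      rotateFamily (fromBlocks O 0 0 O) (Sum.elim A B) := by
  funext i
  cases i <;> simp [rotateFamily]

end Module

section Mul

variable [NonUnitalNonAssocRing 𝒜] [Module ℝ 𝒜]

theorem rotateFamily_mul [IsScalarTower ℝ 𝒜 𝒜] (O : Matrix ι κ ℝ) (X : κ → 𝒜) (i : ι) (Y : 𝒜) :
    rotateFamily O X i * Y = ∑ k, O i k • (X k * Y) := by
  simp [rotateFamily, Finset.sum_mul, smul_mul_assoc]

theorem mul_rotateFamily [SMulCommClass ℝ 𝒜 𝒜] (Y : 𝒜) (O : Matrix ι κ ℝ) (X : κ → 𝒜) (i : ι) :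
    Y * rotateFamily O X i = ∑ k, O i k • (Y * X k) := by
  simp [rotateFamily, Finset.mul_sum, mul_smul_comm]

theorem mul_rotateFamily_eq_neg [IsScalarTower ℝ 𝒜 𝒜] [SMulCommClass ℝ 𝒜 𝒜] {O : Matrix ι κ ℝ}
    {X : κ → 𝒜} {Y : 𝒜} (h : ∀ k, Y * X k = -(X k * Y)) (i : ι) :
    Y * rotateFamily O X i = -(rotateFamily O X i * Y) := by
  simp [mul_rotateFamily, rotateFamily_mul, h]

end Mul

end Rotations

section MajoranaFamilies

variable {ι κ d : Type*} [Fintype d] [DecidableEq d]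

/-- Majorana operators, indexed by an arbitrary type `κ`. The `2n` operators of a system with mode
set `ι` are presented as `Sum.elim A B`, with `A_j = c_{2j-1}` and `B_j = c_{2j}`. -/
structure IsMajoranaFamily [DecidableEq κ] (c : κ → Matrix d d ℂ) : Prop where
  isHermitian : ∀ a, (c a).IsHermitian
  anticommutator : ∀ a b, c a * c b + c b * c a = if a = b then 2 else 0

/-- The Hermitian bilinear `i A_j B_k`. -/
def majoranaBilinear (A B : ι → Matrix d d ℂ) (j k : ι) : Matrix d d ℂ :=
  Complex.I • (A j * B k)

/-- The parity `i c_{2j-1} c_{2j}` of the mode `j`, which equals `2 n_j - 1`. -/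
def parity (A B : ι → Matrix d d ℂ) (j : ι) : Matrix d d ℂ :=
  majoranaBilinear A B j j

namespace IsMajoranaFamily

section Relations

variable [DecidableEq κ] {c : κ → Matrix d d ℂ}

theorem mul_self (hc : IsMajoranaFamily c) (a : κ) : c a * c a = 1 := by
  refine smul_right_injective _ (two_ne_zero' ℂ) ?_
  simpa [two_smul, one_add_one_eq_two] using hc.anticommutator a a

theorem mul_eq_neg (hc : IsMajoranaFamily c) {a b : κ} (hab : a ≠ b) :
    c a * c b = -(c b * c a) := by
  simpa [hab, eq_neg_iff_add_eq_zero] using hc.anticommutator a b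

theorem commute_mul (hc : IsMajoranaFamily c) {a b x : κ} (ha : a ≠ x) (hb : b ≠ x) :
    Commute (c a * c b) (c x) := by
  rw [Commute, SemiconjBy, mul_assoc, hc.mul_eq_neg hb, mul_neg, ← mul_assoc, hc.mul_eq_neg ha,
    neg_mul, neg_neg, mul_assoc]

theorem comp [DecidableEq ι] (hc : IsMajoranaFamily c) {f : ι → κ} (hf : f.Injective) :
    IsMajoranaFamily (c ∘ f) where
  isHermitian j := hc.isHermitian (f j)
  anticommutator j k := by simpa [hf.eq_iff] using hc.anticommutator (f j) (f k)

theorem rotate [DecidableEq ι] [Fintype κ] (hc : IsMajoranaFamily c) {O : Matrix ι κ ℝ}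
    (hO : O * Oᵀ = 1) : IsMajoranaFamily (rotateFamily O c) where
  isHermitian i := by
    simp [Matrix.IsHermitian, rotateFamily, conjTranspose_sum, (hc.isHermitian _).eq]
  anticommutator i j := by
    have hij : ∑ k, O i k * O j k = if i = j then 1 else 0 := by
      simpa [mul_apply, one_apply] using congrFun₂ hO i j
    calc rotateFamily O c i * rotateFamily O c j + rotateFamily O c j * rotateFamily O c i
        = ∑ k, ∑ l, (O i k * O j l) • (c k * c l + c l * c k) := by
          simp only [rotateFamily, Finset.sum_mul_sum, smul_mul_smul_comm, smul_add,
            Finset.sum_add_distrib]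
          congr 1
          rw [Finset.sum_comm]
          simp only [mul_comm]
      _ = (∑ k, O i k * O j k) • 2 := by
          simp [hc.anticommutator, Finset.sum_smul]
      _ = if i = j then 2 else 0 := by rw [hij]; split_ifs <;> simp

end Relations

section Modes

variable [DecidableEq ι] {A B : ι → Matrix d d ℂ}

theorem left (h : IsMajoranaFamily (Sum.elim A B)) : IsMajoranaFamily A :=
  h.comp Sum.inl_injective

theorem right (h : IsMajoranaFamily (Sum.elim A B)) : IsMajoranaFamily B :=
  h.comp Sum.inr_injective

theorem left_mul_right (h : IsMajoranaFamily (Sum.elim A B)) (j k : ι) :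
    A j * B k = -(B k * A j) :=
  h.mul_eq_neg (a := .inl j) (b := .inr k) (by simp)

theorem rotate_sumElim [Fintype ι] (h : IsMajoranaFamily (Sum.elim A B)) {O : Matrix ι ι ℝ}
    (hO : O * Oᵀ = 1) : IsMajoranaFamily (Sum.elim (rotateFamily O A) (rotateFamily O B)) := by
  rw [sumElim_rotateFamily]
  exact h.rotate (by simp [fromBlocks_transpose, fromBlocks_multiply, hO])

theorem commute_parity (h : IsMajoranaFamily (Sum.elim A B)) {j : ι} {x : ι ⊕ ι}
    (hl : .inl j ≠ x) (hr : .inr j ≠ x) : Commute (parity A B j) (Sum.elim A B x) :=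
  (h.commute_mul hl hr).smul_left Complex.I

theorem isReflectionFamily_parity (h : IsMajoranaFamily (Sum.elim A B)) :
    IsReflectionFamily (parity A B) where
  isSelfAdjoint j := by
    simp [IsSelfAdjoint, parity, majoranaBilinear, star_eq_conjTranspose, (h.left.isHermitian j).eq,
      (h.right.isHermitian j).eq, h.left_mul_right j j]
  mul_self j := by
    calc parity A B j * parity A B j = -(A j * (B j * A j) * B j) := by
          simp [parity, majoranaBilinear, smul_smul, mul_assoc]
      _ = A j * A j * (B j * B j) := by
          rw [← neg_eq_iff_eq_neg.mpr (h.left_mul_right j j)]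
          simp [mul_assoc]
      _ = 1 := by rw [h.left.mul_self, h.right.mul_self, mul_one]
  commute j k := by
    obtain rfl | hjk := eq_or_ne j k
    · exact Commute.refl _
    · exact ((h.commute_parity (x := .inl k) (by simpa) (by simp)).mul_right
        (h.commute_parity (x := .inr k) (by simp) (by simpa))).smul_right Complex.I

theorem left_mul_parity (h : IsMajoranaFamily (Sum.elim A B)) (j : ι) :
    A j * parity A B j = -(parity A B j * A j) := by
  have hBA : B j * A j = -(A j * B j) := by rw [h.left_mul_right, neg_neg]
  simp [parity, majoranaBilinear, mul_assoc, hBA]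

theorem trace_signProd_parity (h : IsMajoranaFamily (Sum.elim A B)) (s : ι → ℝ) {L : List ι}
    (hL : L.Nodup) : (signProd (parity A B) s L).trace = Fintype.card d :=
  trace_signProd h.left.mul_self h.left_mul_parity
    (fun _ _ hjk => (h.commute_parity (x := .inl _) (by simpa using hjk.symm) (by simp)).symm) s hL

end Modes

end IsMajoranaFamily

end MajoranaFamilies

section Covariance

variable {ι d : Type*} [Fintype ι] [DecidableEq ι] [Fintype d]

/-- `ρ` is a normalized matrix for which multiplication by `B_j`, on either side, amounts to
multiplication by `∓ i ∑_k M_{jk} A_k`. These are the defining relations of the pure Gaussian state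
with `tr (i A_j B_k ρ) = M_{kj}` whose remaining second moments vanish. -/
structure HasCovariance (A B : ι → Matrix d d ℂ) (M : Matrix ι ι ℝ) (ρ : Matrix d d ℂ) :
    Prop where
  trace_eq_one : ρ.trace = 1
  mul_self : M * M = 1
  right_mul : ∀ j, B j * ρ = -(Complex.I • (rotateFamily M A j * ρ))
  mul_right : ∀ j, ρ * B j = Complex.I • (ρ * rotateFamily M A j)

namespace HasCovariance

variable {A B : ι → Matrix d d ℂ} {M : Matrix ι ι ℝ} {ρ : Matrix d d ℂ}

theorem of_rotate {W : Matrix ι ι ℝ} (hW : Wᵀ * W = 1)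
    (h : HasCovariance (rotateFamily W A) (rotateFamily W B) M ρ) :
    HasCovariance A B (Wᵀ * M * W) ρ := by
  have hA : rotateFamily (Wᵀ * M * W) A = rotateFamily Wᵀ (rotateFamily M (rotateFamily W A)) := by
    simp only [rotateFamily_rotateFamily, mul_assoc]
  have hB : ∀ j, B j = rotateFamily Wᵀ (rotateFamily W B) j := fun j => by
    rw [rotateFamily_rotateFamily, hW, rotateFamily_one]
  refine ⟨h.trace_eq_one, ?_, fun j => ?_, fun j => ?_⟩
  · calc Wᵀ * M * W * (Wᵀ * M * W) = Wᵀ * (M * (W * Wᵀ) * M) * W := by simp only [mul_assoc]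
      _ = 1 := by rw [mul_eq_one_comm.mp hW, mul_one, h.mul_self, mul_one, hW]
  · rw [hA, hB, rotateFamily_mul, rotateFamily_mul]
    simp only [h.right_mul, smul_neg, Finset.sum_neg_distrib, Finset.smul_sum, smul_comm Complex.I]
  · rw [hA, hB, mul_rotateFamily, mul_rotateFamily]
    simp only [h.mul_right, Finset.smul_sum, smul_comm Complex.I]

theorem left_mul (h : HasCovariance A B M ρ) (j : ι) :
    A j * ρ = Complex.I • (rotateFamily M B j * ρ) := by
  have hsum : rotateFamily M B j * ρ =
      -(Complex.I • (rotateFamily M (rotateFamily M A) j * ρ)) := by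
    rw [rotateFamily_mul, rotateFamily_mul]
    simp only [h.right_mul, smul_neg, Finset.sum_neg_distrib, Finset.smul_sum, smul_comm Complex.I]
  rw [hsum, rotateFamily_rotateFamily, h.mul_self, rotateFamily_one]
  simp [smul_smul]

theorem mul_left (h : HasCovariance A B M ρ) (j : ι) :
    ρ * A j = -(Complex.I • (ρ * rotateFamily M B j)) := by
  have hsum : ρ * rotateFamily M B j = Complex.I • (ρ * rotateFamily M (rotateFamily M A) j) := by
    rw [mul_rotateFamily, mul_rotateFamily]
    simp only [h.mul_right, Finset.smul_sum, smul_comm Complex.I]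
  rw [hsum, rotateFamily_rotateFamily, h.mul_self, rotateFamily_one]
  simp [smul_smul]

/-- Trading `A_j` for a combination of the `B_k` carries it around the trace past `X`. -/
theorem trace_left_mul_comm (h : HasCovariance A B M ρ) {X : Matrix d d ℂ}
    (hX : ∀ k, X * B k = -(B k * X)) (j : ι) : (A j * X * ρ).trace = (X * A j * ρ).trace := by
  calc (A j * X * ρ).trace = (X * (ρ * A j)).trace := by
        rw [mul_assoc, trace_mul_comm, mul_assoc]
    _ = -(Complex.I * (rotateFamily M B j * X * ρ).trace) := by
        rw [h.mul_left, mul_neg, mul_smul_comm, trace_neg, trace_smul, smul_eq_mul, ← mul_assoc,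
          trace_mul_comm, ← mul_assoc]
    _ = Complex.I * (X * rotateFamily M B j * ρ).trace := by
        rw [mul_rotateFamily_eq_neg hX, neg_mul, trace_neg, mul_neg]
    _ = (X * A j * ρ).trace := by
        rw [mul_assoc X (A j), h.left_mul, mul_smul_comm, trace_smul, smul_eq_mul, ← mul_assoc]

variable [DecidableEq d]

theorem of_parity (hAB : IsMajoranaFamily (Sum.elim A B)) {s : ι → ℝ} (hs : IsSignVector s)
    (htr : ρ.trace = 1) (hl : ∀ j, parity A B j * ρ = s j • ρ)
    (hr : ∀ j, ρ * parity A B j = s j • ρ) : HasCovariance A B (diagonal s) ρ where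
  trace_eq_one := htr
  mul_self := by simp [diagonal_mul_diagonal, hs.mul_self]
  right_mul j := by
    have hB : B j = -(Complex.I • (A j * parity A B j)) := by
      simp [parity, majoranaBilinear, smul_smul, ← mul_assoc, hAB.left.mul_self]
    rw [rotateFamily_diagonal, hB, neg_mul, smul_mul_assoc, mul_assoc, hl, smul_mul_assoc,
      mul_smul_comm]
  mul_right j := by
    have hB : B j = Complex.I • (parity A B j * A j) := by
      rw [← neg_neg (parity A B j * A j), ← hAB.left_mul_parity]
      simp [parity, majoranaBilinear, smul_smul, ← mul_assoc, hAB.left.mul_self]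
    rw [rotateFamily_diagonal, hB, mul_smul_comm, ← mul_assoc, hr, smul_mul_assoc, mul_smul_comm]

theorem trace_left_mul_left (h : HasCovariance A B M ρ) (hAB : IsMajoranaFamily (Sum.elim A B))
    (j k : ι) : (A j * A k * ρ).trace = if j = k then 1 else 0 := by
  have hcomm := h.trace_left_mul_comm (X := A k) (hAB.left_mul_right k) j
  have hsum : (A j * A k * ρ).trace + (A k * A j * ρ).trace = if j = k then 2 else 0 := by
    rw [← trace_add, ← add_mul, hAB.left.anticommutator]
    split_ifs <;> simp [two_mul, h.trace_eq_one, one_add_one_eq_two]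
  rw [← hcomm] at hsum
  split_ifs at hsum ⊢ <;> linear_combination hsum / 2

/-- Wick's theorem for four operators: carry `A_j` around the trace, then back through the other
three by anticommutation. -/
theorem trace_left_mul_left_mul_left_mul_left (h : HasCovariance A B M ρ)
    (hAB : IsMajoranaFamily (Sum.elim A B)) (j k l m : ι) :
    (A j * A k * A l * A m * ρ).trace =
      (if j = k then 1 else 0) * (if l = m then 1 else 0) -
      (if j = l then 1 else 0) * (if k = m then 1 else 0) +
      (if j = m then 1 else 0) * (if k = l then 1 else 0) := by
  have hodd : ∀ i, A k * A l * A m * B i = -(B i * (A k * A l * A m)) := fun i => by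
    have hAB' := fun x => hAB.left_mul_right x i
    rw [mul_assoc, hAB', mul_neg, ← mul_assoc, mul_assoc (A k), hAB', mul_neg, ← mul_assoc, hAB']
    simp only [neg_mul, neg_neg, mul_assoc]
  have hcyc : (A j * A k * A l * A m * ρ).trace = (A k * A l * A m * A j * ρ).trace := by
    simpa only [mul_assoc] using h.trace_left_mul_comm hodd j
  have hδ : ∀ x, A j * A x = (if j = x then 2 else 0 : ℂ) • 1 - A x * A j := fun x => by
    rw [eq_sub_iff_add_eq, hAB.left.anticommutator]
    split_ifs <;> simp [two_smul, one_add_one_eq_two]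
  have hmove : A j * A k * A l * A m + A k * A l * A m * A j =
      (if j = k then 2 else 0 : ℂ) • (A l * A m) - (if j = l then 2 else 0 : ℂ) • (A k * A m) +
        (if j = m then 2 else 0 : ℂ) • (A k * A l) := by
    calc A j * A k * A l * A m + A k * A l * A m * A j
        = (A j * A k + A k * A j) * (A l * A m) - A k * (A j * A l + A l * A j) * A m +
            A k * A l * (A j * A m + A m * A j) := by noncomm_ring
      _ = _ := by simp [hδ]
  have hsum := congrArg (fun Y => (Y * ρ).trace) hmove
  simp only [add_mul, sub_mul, smul_mul_assoc, trace_add, trace_sub, trace_smul, smul_eq_mul,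
    ← hcyc, h.trace_left_mul_left hAB] at hsum
  split_ifs at hsum ⊢ <;> linear_combination hsum / 2

theorem trace_majoranaBilinear (h : HasCovariance A B M ρ) (hAB : IsMajoranaFamily (Sum.elim A B))
    (j k : ι) : (majoranaBilinear A B j k * ρ).trace = M k j := by
  rw [majoranaBilinear, smul_mul_assoc, mul_assoc, h.right_mul, mul_neg, mul_smul_comm,
    ← mul_assoc, mul_rotateFamily, Finset.sum_mul]
  simp [trace_sum, h.trace_left_mul_left hAB, ← mul_assoc]

theorem trace_parity_mul_parity (h : HasCovariance A B M ρ)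
    (hAB : IsMajoranaFamily (Sum.elim A B)) {j k : ι} (hjk : j ≠ k) :
    (parity A B j * parity A B k * ρ).trace = M j j * M k k - M j k * M k j := by
  have hreorder : parity A B j * parity A B k = A j * A k * (B j * B k) := by
    have hBA : B j * A k = -(A k * B j) := by rw [hAB.left_mul_right, neg_neg]
    calc parity A B j * parity A B k = -(A j * (B j * A k) * B k) := by
          simp [parity, majoranaBilinear, smul_smul, mul_assoc]
      _ = A j * A k * (B j * B k) := by simp [hBA, mul_assoc]
  have hBB : B j * B k * ρ = rotateFamily M A k * rotateFamily M A j * ρ := by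
    have hBA : B j * rotateFamily M A k = -(rotateFamily M A k * B j) :=
      mul_rotateFamily_eq_neg (fun l => by rw [hAB.left_mul_right, neg_neg]) k
    rw [mul_assoc, h.right_mul, mul_neg, mul_smul_comm, ← mul_assoc, hBA, neg_mul, mul_assoc,
      h.right_mul]
    simp [smul_smul, mul_assoc]
  calc (parity A B j * parity A B k * ρ).trace
      = ∑ l, ∑ m, (M j m * (M k l * (A j * A k * A l * A m * ρ).trace) : ℂ) := by
        rw [hreorder, mul_assoc, hBB, rotateFamily, rotateFamily, Finset.sum_mul_sum]
        simp only [Finset.sum_mul, Finset.mul_sum, trace_sum, smul_mul_assoc,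
          mul_smul_comm, trace_smul, Complex.real_smul, mul_assoc]
    _ = M j j * M k k - M j k * M k j := by
        simp only [h.trace_left_mul_left_mul_left_mul_left hAB, hjk, ↓reduceIte, mul_ite, mul_one,
          mul_zero, ite_self, zero_sub, mul_add, mul_neg, Finset.sum_add_distrib,
          Finset.sum_neg_distrib, Finset.sum_ite_eq, Finset.mem_univ, Finset.sum_ite_irrel,
          Finset.sum_const_zero]
        ring

end HasCovariance

end Covariance

section Hamiltonians

variable {ι 𝒜 d : Type*} [Fintype ι]

section Classical

variable [Ring 𝒜] [Algebra ℝ 𝒜]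

/-- The diagonal part `∑_{jk} w_{jk} (1/4 - n_j n_k) + ∑_j μ_j (n_j - 1/2)` of the Hamiltonian as a
polynomial in the parities `Z_j = 2 n_j - 1`. It is also evaluated at sign vectors, for which
`𝒜 = ℝ`. -/
def classicalHamiltonian (E : Finset (ι × ι)) (w : ι × ι → ℝ) (μ : ι → ℝ) (Z : ι → 𝒜) : 𝒜 :=
  ∑ e ∈ E, -(w e / 4) • (Z e.1 + Z e.2 + Z e.1 * Z e.2) + ∑ j, (μ j / 2) • Z j

variable {E : Finset (ι × ι)} {w : ι × ι → ℝ} {μ : ι → ℝ} {Z : ι → 𝒜}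

theorem mul_classicalHamiltonian {s : ι → ℝ} {P : 𝒜} (hP : ∀ j, P * Z j = s j • P) :
    P * classicalHamiltonian E w μ Z = classicalHamiltonian E w μ s • P := by
  have hprod : ∀ j k, P * (Z j * Z k) = (s j * s k) • P := fun j k => by
    rw [← mul_assoc, hP, smul_mul_assoc, hP, smul_smul]
  simp only [classicalHamiltonian, mul_add, Finset.mul_sum, mul_smul_comm, hP, hprod, add_smul,
    Finset.sum_smul, smul_assoc, smul_add]

theorem classicalHamiltonian_le_smul_one [StarRing 𝒜] [StarModule ℝ 𝒜] [PartialOrder 𝒜]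
    [StarOrderedRing 𝒜] [PosSMulMono ℝ 𝒜] (hZ : IsReflectionFamily Z) {b : ℝ}
    (hb : ∀ s, IsSignVector s → classicalHamiltonian E w μ s ≤ b) :
    classicalHamiltonian E w μ Z ≤ b • (1 : 𝒜) := by
  rw [← sub_nonneg]
  refine nonneg_of_forall_signProd_mul_nonneg (Z := Z) (L := Finset.univ.toList)
    (Finset.nodup_toList _) fun s hs => ?_
  have heig : ∀ j, signProd Z s Finset.univ.toList * Z j = s j • signProd Z s Finset.univ.toList :=
    fun j => hZ.signProd_mul hs (Finset.mem_toList.mpr (Finset.mem_univ j))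
  rw [mul_sub, mul_classicalHamiltonian heig, mul_smul_comm, mul_one, ← sub_smul]
  exact smul_nonneg (sub_nonneg.mpr (hb s hs)) (hZ.signProd_nonneg hs _)

end Classical

section Quadratic

variable [Fintype d]

/-- The quadratic Hamiltonian `∑_{jk} T_{jk} i A_j B_k`, linear in its coefficient matrix. -/
def quadraticHamiltonian (A B : ι → Matrix d d ℂ) : Matrix ι ι ℝ →ₗ[ℝ] Matrix d d ℂ :=
  ∑ j, ∑ k, (entryLinearMap ℝ ℝ j k).smulRight (majoranaBilinear A B j k)

theorem quadraticHamiltonian_apply (A B : ι → Matrix d d ℂ) (T : Matrix ι ι ℝ) :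
    quadraticHamiltonian A B T = ∑ j, ∑ k, T j k • majoranaBilinear A B j k := by
  simp [quadraticHamiltonian]

theorem parity_rotateFamily (A B : ι → Matrix d d ℂ) (O : Matrix ι ι ℝ) (l : ι) :
    parity (rotateFamily O A) (rotateFamily O B) l =
      ∑ j, ∑ k, (O l j * O l k) • majoranaBilinear A B j k := by
  simp only [parity, majoranaBilinear, rotateFamily, Finset.sum_mul_sum, smul_mul_smul_comm,
    Finset.smul_sum, smul_comm Complex.I]

variable [DecidableEq ι]

theorem quadraticHamiltonian_single (A B : ι → Matrix d d ℂ) (j k : ι) (x : ℝ) :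
    quadraticHamiltonian A B (single j k x) = x • majoranaBilinear A B j k := by
  rw [quadraticHamiltonian_apply, Finset.sum_eq_single j, Finset.sum_eq_single k]
  all_goals simp +contextual [single_apply, eq_comm]

theorem quadraticHamiltonian_conj_diagonal (A B : ι → Matrix d d ℂ) (V : Matrix ι ι ℝ)
    (ε : ι → ℝ) : quadraticHamiltonian A B (V * diagonal ε * Vᵀ) =
      ∑ l, ε l • parity (rotateFamily Vᵀ A) (rotateFamily Vᵀ B) l := by
  simp only [quadraticHamiltonian_apply, conj_diagonal_apply, parity_rotateFamily, Finset.sum_smul,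
    Finset.smul_sum, smul_smul, transpose_apply]
  rw [Finset.sum_comm_cycle]

variable [DecidableEq d] {A B : ι → Matrix d d ℂ}

theorem quadraticHamiltonian_le_smul_one (hAB : IsMajoranaFamily (Sum.elim A B)) {V : Matrix ι ι ℝ}
    (hV : V * Vᵀ = 1) (ε : ι → ℝ) :
    quadraticHamiltonian A B (V * diagonal ε * Vᵀ) ≤ (∑ l, |ε l|) • 1 := by
  have hrot := hAB.rotate_sumElim (O := Vᵀ) (by rw [transpose_transpose, mul_eq_one_comm.mp hV])
  rw [quadraticHamiltonian_conj_diagonal, Finset.sum_smul]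
  exact Finset.sum_le_sum fun l _ => hrot.isReflectionFamily_parity.smul_le_abs_smul_one _ l

end Quadratic

section Energy

variable {E : Finset (ι × ι)} {w : ι × ι → ℝ} {μ : ι → ℝ} {T : Matrix ι ι ℝ}

/-- The energy of the pure Gaussian state with covariance matrix `M`: by Wick's theorem, the
expectation of `Z_j Z_k` is the `{j, k}` principal minor of `M`. -/
def gaussianEnergy (E : Finset (ι × ι)) (w : ι × ι → ℝ) (μ : ι → ℝ) (T M : Matrix ι ι ℝ) : ℝ :=
  ∑ e ∈ E, -(w e / 4) *
      (M e.1 e.1 + M e.2 e.2 + (M e.1 e.1 * M e.2 e.2 - M e.1 e.2 * M e.2 e.1)) +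
    ∑ j, μ j / 2 * M j j + 1 / 2 * (T * M).trace

/-- A rank-one perturbation changes `2 × 2` minors affinely. -/
theorem convexOn_gaussianEnergy (M : Matrix ι ι ℝ) (u v : ι → ℝ) {S : Set ℝ} (hS : Convex ℝ S) :
    ConvexOn ℝ S fun x => gaussianEnergy E w μ T (M + x • vecMulVec u v) := by
  refine ⟨hS, fun x _ y _ a b _ _ hab => le_of_eq ?_⟩
  obtain rfl : b = 1 - a := eq_sub_of_add_eq' hab
  simp only [gaussianEnergy, smul_eq_mul]
  rw [mul_add a, mul_add (1 - a), add_add_add_comm, mul_add a, mul_add (1 - a),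
    add_add_add_comm (a * _), Finset.mul_sum, Finset.mul_sum, Finset.mul_sum, Finset.mul_sum,
    ← Finset.sum_add_distrib, ← Finset.sum_add_distrib]
  refine congrArg₂ _ (congrArg₂ _ (Finset.sum_congr rfl fun e _ => ?_)
    (Finset.sum_congr rfl fun j _ => ?_)) ?_
  · simp only [Matrix.add_apply, Matrix.smul_apply, smul_eq_mul, vecMulVec_apply]
    ring
  · simp only [Matrix.add_apply, Matrix.smul_apply, smul_eq_mul, vecMulVec_apply]
    ring
  · simp only [mul_add T, mul_smul_comm, trace_add, trace_smul, smul_eq_mul]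
    ring

theorem le_gaussianEnergy_of_diag_eq_zero (hw : ∀ e ∈ E, 0 ≤ w e) {M : Matrix ι ι ℝ} (hM : Mᵀ = M)
    (hdiag : M.diag = 0) : 1 / 2 * (T * M).trace ≤ gaussianEnergy E w μ T M := by
  have hdiag : ∀ j, M j j = 0 := congrFun hdiag
  have hnonneg : 0 ≤ ∑ e ∈ E, w e / 4 * (M e.1 e.2 * M e.2 e.1) := by
    refine Finset.sum_nonneg fun e he => ?_
    rw [← congrFun₂ hM e.1 e.2, transpose_apply]
    exact mul_nonneg (by linarith [hw e he]) (mul_self_nonneg _)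
  simpa [gaussianEnergy, hdiag] using hnonneg

variable [DecidableEq ι]

theorem HasCovariance.trace_hamiltonian [Fintype d] [DecidableEq d] {A B : ι → Matrix d d ℂ}
    {M : Matrix ι ι ℝ} {ρ : Matrix d d ℂ} (h : HasCovariance A B M ρ)
    (hAB : IsMajoranaFamily (Sum.elim A B)) (hE : ∀ e ∈ E, e.1 ≠ e.2) :
    ((classicalHamiltonian E w μ (parity A B) + (1 / 2 : ℝ) • quadraticHamiltonian A B T) *
      ρ).trace = gaussianEnergy E w μ T M := by
  have hZ : ∀ j, (parity A B j * ρ).trace = M j j := fun j => h.trace_majoranaBilinear hAB j j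
  have hZZ : ∀ e ∈ E, (parity A B e.1 * parity A B e.2 * ρ).trace =
      M e.1 e.1 * M e.2 e.2 - M e.1 e.2 * M e.2 e.1 := fun e he =>
    h.trace_parity_mul_parity hAB (hE e he)
  have hT : (quadraticHamiltonian A B T * ρ).trace = ((T * M).trace : ℂ) := by
    have htr : (T * M).trace = ∑ j, ∑ k, T j k * M k j := by simp [trace, mul_apply]
    simp [quadraticHamiltonian_apply, Finset.sum_mul, trace_sum, h.trace_majoranaBilinear hAB, htr]
  simp only [classicalHamiltonian, gaussianEnergy, add_mul, Finset.sum_mul, smul_mul_assoc,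
    trace_add, trace_sum, trace_smul, hZ, hT, Complex.real_smul]
  push_cast
  congr! 3 with e he
  rw [hZZ e he]

theorem gaussianEnergy_diagonal (hE : ∀ e ∈ E, e.1 ≠ e.2) (hT : T.diag = 0) (s : ι → ℝ) :
    gaussianEnergy E w μ T (diagonal s) = classicalHamiltonian E w μ s := by
  have hE' : ∀ e ∈ E, -(w e / 4) * (diagonal s e.1 e.1 + diagonal s e.2 e.2 +
      (diagonal s e.1 e.1 * diagonal s e.2 e.2 - diagonal s e.1 e.2 * diagonal s e.2 e.1)) =
      -(w e / 4) * (s e.1 + s e.2 + s e.1 * s e.2) := fun e he => by simp [hE e he]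
  have htr : (T * diagonal s).trace = 0 := by
    refine Finset.sum_eq_zero fun j _ => ?_
    rw [diag_apply, mul_diagonal, ← diag_apply T, hT, Pi.zero_apply, zero_mul]
  rw [gaussianEnergy, Finset.sum_congr rfl hE', htr]
  simp [classicalHamiltonian]

theorem conj_diagonal_update (V : Matrix ι ι ℝ) (s : ι → ℝ) (l : ι) (x : ℝ) :
    V * diagonal (Function.update s l x) * Vᵀ =
      V * diagonal (Function.update s l 0) * Vᵀ + x • vecMulVec (V.col l) (V.col l) := by
  have hupd : Function.update s l x = Function.update s l 0 + x • Pi.single l 1 := by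
    ext m
    by_cases hm : m = l <;> simp [hm]
  ext j k
  simp [hupd, conj_diagonal_apply, add_mul, Finset.sum_add_distrib, Pi.single_apply,
    vecMulVec_apply]

theorem exists_gaussianEnergy_ge (hw : ∀ e ∈ E, 0 ≤ w e) {V : Matrix ι ι ℝ} (hV : V * Vᵀ = 1)
    {ε : ι → ℝ} (hdiag : (V * diagonal ε * Vᵀ).diag = 0) :
    ∃ (U : Matrix ι ι ℝ) (t : ι → ℝ), U * Uᵀ = 1 ∧ IsSignVector t ∧
      1 / 4 * ∑ l, |ε l| ≤ gaussianEnergy E w μ (V * diagonal ε * Vᵀ) (U * diagonal t * Uᵀ) := by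
  obtain ⟨M, hsymm, hmem, hM, htr⟩ := exists_contraction_zero_diag hV hdiag
  obtain ⟨U, m, hU, rfl⟩ := exists_orthogonal_diagonal hsymm
  have hconv : ∀ s l, ConvexOn ℝ (Set.Icc (-1) 1) fun x =>
      gaussianEnergy E w μ (V * diagonal ε * Vᵀ) (U * diagonal (Function.update s l x) * Uᵀ) :=
    fun s l => by
      simpa only [← conj_diagonal_update] using convexOn_gaussianEnergy
        (U * diagonal (Function.update s l 0) * Uᵀ) (U.col l) (U.col l) (convex_Icc (-1) 1)
  obtain ⟨t, ht, hmt⟩ := exists_vertex_ge_of_convexOn_update (a := -1) (b := 1)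
    (f := fun s => gaussianEnergy E w μ (V * diagonal ε * Vᵀ) (U * diagonal s * Uᵀ)) hconv
    ((conj_diagonal_mem_Icc_iff hU).mp hmem)
  refine ⟨U, t, hU, ht, le_trans ?_ hmt⟩
  linarith [le_gaussianEnergy_of_diag_eq_zero (μ := μ) (T := V * diagonal ε * Vᵀ) hw hsymm hM]

end Energy

end Hamiltonians

section Approximation

variable {ι : Type*} [Fintype ι] {m : Type} [Fintype m] [DecidableEq m] {E : Finset (ι × ι)}
  {w : ι × ι → ℝ} {μ : ι → ℝ} {A B : ι → Matrix m m ℂ} [DecidableEq ι]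

theorem lamMax_hamiltonian_le (hAB : IsMajoranaFamily (Sum.elim A B)) {V : Matrix ι ι ℝ}
    (hV : V * Vᵀ = 1) (ε : ι → ℝ) {b : ℝ} (hb : 0 ≤ b)
    (hmax : ∀ s, IsSignVector s → classicalHamiltonian E w μ s ≤ b) :
    lamMax (classicalHamiltonian E w μ (parity A B) +
      (1 / 2 : ℝ) • quadraticHamiltonian A B (V * diagonal ε * Vᵀ)) ≤
      b + 1 / 2 * ∑ l, |ε l| := by
  refine lamMax_le (by positivity) ?_
  rw [add_smul, mul_smul]
  exact add_le_add (classicalHamiltonian_le_smul_one hAB.isReflectionFamily_parity hmax)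
    (smul_le_smul_of_nonneg_left (quadraticHamiltonian_le_smul_one hAB hV ε) (by norm_num))

theorem exists_lamMax_hamiltonian_le_three_mul_gaussianEnergy
    (hAB : IsMajoranaFamily (Sum.elim A B)) (hE : ∀ e ∈ E, e.1 ≠ e.2) (hw : ∀ e ∈ E, 0 ≤ w e)
    {T : Matrix ι ι ℝ} (hT : Tᵀ = T) (hdiag : T.diag = 0) :
    ∃ (U : Matrix ι ι ℝ) (t : ι → ℝ), U * Uᵀ = 1 ∧ IsSignVector t ∧
      lamMax (classicalHamiltonian E w μ (parity A B) +
        (1 / 2 : ℝ) • quadraticHamiltonian A B T) ≤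
        3 * gaussianEnergy E w μ T (U * diagonal t * Uᵀ) := by
  obtain ⟨V, ε, hV, rfl⟩ := exists_orthogonal_diagonal hT
  obtain ⟨s, hs, hs_max⟩ := exists_isSignVector_forall_le (classicalHamiltonian E w μ)
  obtain ⟨U, t, hU, ht, ht_ge⟩ := exists_gaussianEnergy_ge (μ := μ) hw hV hdiag
  have hε : 0 ≤ ∑ l, |ε l| := Finset.sum_nonneg fun l _ => abs_nonneg _
  have hs_energy : gaussianEnergy E w μ (V * diagonal ε * Vᵀ) (1 * diagonal s * 1ᵀ) =
      classicalHamiltonian E w μ s := by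
    rw [transpose_one, one_mul, mul_one, gaussianEnergy_diagonal hE hdiag]
  rcases le_total (1 / 4 * ∑ l, |ε l|) (classicalHamiltonian E w μ s) with hle | hle
  · refine ⟨1, s, by simp, hs, ?_⟩
    linarith [lamMax_hamiltonian_le hAB hV ε (by linarith) hs_max]
  · refine ⟨U, t, hU, ht, ?_⟩
    linarith [lamMax_hamiltonian_le hAB hV ε (by linarith) fun r hr => (hs_max r hr).trans hle]

end Approximation

section HoppingMatrix

variable {ι : Type*} [DecidableEq ι]

/-- The coefficient matrix for which `∑_{jk} w'_{jk} (-a_j† a_k - a_k† a_j)` is half of the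
quadratic Hamiltonian. -/
def hoppingMatrix (E' : Finset (ι × ι)) (w' : ι × ι → ℝ) : Matrix ι ι ℝ :=
  -∑ e ∈ E', w' e • (single e.1 e.2 1 + single e.2 e.1 1)

theorem hoppingMatrix_transpose (E' : Finset (ι × ι)) (w' : ι × ι → ℝ) :
    (hoppingMatrix E' w')ᵀ = hoppingMatrix E' w' := by
  simp [hoppingMatrix, transpose_sum, add_comm]

theorem hoppingMatrix_diag {E' : Finset (ι × ι)} (hE' : ∀ e ∈ E', e.1 ≠ e.2) (w' : ι × ι → ℝ) :
    (hoppingMatrix E' w').diag = 0 := by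
  rw [hoppingMatrix, diag_neg, diag_sum, neg_eq_zero]
  refine Finset.sum_eq_zero fun e he => ?_
  simp [diag_single_of_ne, hE' e he, (hE' e he).symm]

end HoppingMatrix

section Fock

variable {n : ℕ} {c : Fin (2 * n) → Matrix (Fin (2 ^ n)) (Fin (2 ^ n)) ℂ}

/-- The position of the Majorana operators `A_j` and `B_j` of mode `j` in the sequence `c`. -/
def modeEquiv (n : ℕ) : Fin n ⊕ Fin n ≃ Fin (2 * n) :=
  Equiv.ofBijective (Sum.elim (fun j => ⟨2 * j, by omega⟩) fun j => ⟨2 * j + 1, by omega⟩) <| by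
    refine (Fintype.bijective_iff_injective_and_card _).mpr ⟨?_, by simp [two_mul]⟩
    rintro (j | j) (k | k) h <;>
      simp only [Sum.elim_inl, Sum.elim_inr, Sum.inl.injEq, Sum.inr.injEq,
        reduceCtorEq, Fin.ext_iff] at h ⊢ <;> omega

theorem sumElim_majA_majB (c : Fin (2 * n) → Matrix (Fin (2 ^ n)) (Fin (2 ^ n)) ℂ) :
    Sum.elim (majA n c) (majB n c) = c ∘ modeEquiv n := by
  funext x
  cases x <;> rfl

theorem IsMajorana.isMajoranaFamily (hc : IsMajorana n c) :
    IsMajoranaFamily (Sum.elim (majA n c) (majB n c)) := by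
  have hc : IsMajoranaFamily c := ⟨hc.1, by simpa [two_smul, one_add_one_eq_two] using hc.2⟩
  exact sumElim_majA_majB c ▸ hc.comp (modeEquiv n).injective

/-- The rotation of all `2n` Majorana operators which acts by `W` on both `A` and `B`. -/
def modeRotation (W : Matrix (Fin n) (Fin n) ℝ) : Matrix (Fin (2 * n)) (Fin (2 * n)) ℝ :=
  reindex (modeEquiv n) (modeEquiv n) (fromBlocks W 0 0 W)

theorem modeRotation_mul_transpose {W : Matrix (Fin n) (Fin n) ℝ} (hW : W * Wᵀ = 1) :
    modeRotation W * (modeRotation W)ᵀ = 1 := by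
  simp [modeRotation, fromBlocks_transpose, fromBlocks_multiply, hW, submatrix_mul_equiv]

theorem det_modeRotation {W : Matrix (Fin n) (Fin n) ℝ} (hW : W * Wᵀ = 1) :
    (modeRotation W).det = 1 := by
  have hdet := congrArg det hW
  rw [modeRotation, det_reindex_self, det_fromBlocks_zero₂₁]
  simpa using hdet

theorem rotateFamily_modeRotation (W : Matrix (Fin n) (Fin n) ℝ)
    (c : Fin (2 * n) → Matrix (Fin (2 ^ n)) (Fin (2 ^ n)) ℂ) (x : Fin n ⊕ Fin n) :
    rotateFamily (modeRotation W) c (modeEquiv n x) =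
      Sum.elim (rotateFamily W (majA n c)) (rotateFamily W (majB n c)) x := by
  rw [sumElim_rotateFamily, sumElim_majA_majB, rotateFamily, rotateFamily,
    ← (modeEquiv n).sum_comp]
  simp [modeRotation]

theorem gaussOf_modeRotation (s : Fin n → ℝ) (W : Matrix (Fin n) (Fin n) ℝ) :
    gaussOf n c s (modeRotation W) = ((2 : ℂ) ^ n)⁻¹ •
      signProd (parity (rotateFamily W (majA n c)) (rotateFamily W (majB n c))) s
        (List.finRange n) := by
  have hA : ∀ j, ∑ k, modeRotation W (modeEquiv n (.inl j)) k • c k =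
      rotateFamily W (majA n c) j := fun j => rotateFamily_modeRotation W c (.inl j)
  have hB : ∀ j, ∑ k, modeRotation W (modeEquiv n (.inr j)) k • c k =
      rotateFamily W (majB n c) j := fun j => rotateFamily_modeRotation W c (.inr j)
  simp only [gaussOf, signProd, parity, majoranaBilinear, ← hA, ← hB, Complex.coe_smul,
    mul_comm Complex.I, mul_smul]
  rfl

theorem exists_isPureGaussianState_hasCovariance (hc : IsMajorana n c)
    {V : Matrix (Fin n) (Fin n) ℝ} (hV : V * Vᵀ = 1) {s : Fin n → ℝ} (hs : IsSignVector s) :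
    ∃ ρ, IsPureGaussianState n c ρ ∧
      HasCovariance (majA n c) (majB n c) (V * diagonal s * Vᵀ) ρ := by
  have hV' : Vᵀ * Vᵀᵀ = 1 := by rw [transpose_transpose, mul_eq_one_comm.mp hV]
  have hAB := hc.isMajoranaFamily.rotate_sumElim hV'
  have hZ := hAB.isReflectionFamily_parity
  have hcov : HasCovariance (rotateFamily Vᵀ (majA n c)) (rotateFamily Vᵀ (majB n c)) (diagonal s)
      (gaussOf n c s (modeRotation Vᵀ)) := by
    rw [gaussOf_modeRotation]
    refine .of_parity hAB hs ?_ (fun j => ?_) fun j => ?_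
    · simp [trace_smul, hAB.trace_signProd_parity s (List.nodup_finRange n)]
    · rw [mul_smul_comm, hZ.mul_signProd hs (List.mem_finRange j), smul_comm]
    · rw [smul_mul_assoc, hZ.signProd_mul hs (List.mem_finRange j), smul_comm]
  refine ⟨gaussOf n c s (modeRotation Vᵀ), ⟨s, modeRotation Vᵀ, hs, modeRotation_mul_transpose hV',
    det_modeRotation hV', rfl⟩, ?_⟩
  simpa using hcov.of_rotate (by simpa using hV)

theorem conjTranspose_ann_mul_ann (hc : IsMajorana n c) (j k : Fin n) :
    (ann n c j)ᴴ * ann n c k =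
      (1 / 4 : ℝ) • (majA n c j * majA n c k + majB n c j * majB n c k +
        (majoranaBilinear (majA n c) (majB n c) j k +
          majoranaBilinear (majA n c) (majB n c) k j)) := by
  have hAB := hc.isMajoranaFamily
  have hBA : majB n c j * majA n c k = -(majA n c k * majB n c j) := by
    rw [hAB.left_mul_right, neg_neg]
  have hstar : (ann n c j)ᴴ = (1 / 2 : ℂ) • (majA n c j - Complex.I • majB n c j) := by
    simp [ann, (hAB.left.isHermitian j).eq, (hAB.right.isHermitian j).eq, sub_eq_add_neg]
  have hBB : Complex.I • majB n c j * Complex.I • majB n c k = -(majB n c j * majB n c k) := by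
    rw [smul_mul_smul_comm, Complex.I_mul_I, neg_one_smul]
  rw [hstar, ann, smul_mul_smul_comm, sub_mul, mul_add, mul_add, hBB, majoranaBilinear,
    majoranaBilinear, smul_mul_assoc, mul_smul_comm, hBA]
  module

theorem num_eq (hc : IsMajorana n c) (j : Fin n) :
    num n c j = (1 / 2 : ℝ) • (1 + parity (majA n c) (majB n c) j) := by
  have hAB := hc.isMajoranaFamily
  rw [num, conjTranspose_ann_mul_ann hc, hAB.left.mul_self, hAB.right.mul_self, parity]
  module

theorem hopping_eq (hc : IsMajorana n c) {j k : Fin n} (hjk : j ≠ k) :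
    (ann n c j)ᴴ * ann n c k + (ann n c k)ᴴ * ann n c j = (1 / 2 : ℝ) •
      (majoranaBilinear (majA n c) (majB n c) j k +
        majoranaBilinear (majA n c) (majB n c) k j) := by
  have hAB := hc.isMajoranaFamily
  rw [conjTranspose_ann_mul_ann hc, conjTranspose_ann_mul_ann hc, hAB.left.mul_eq_neg hjk,
    hAB.right.mul_eq_neg hjk]
  module

theorem hamiltonian_eq (hc : IsMajorana n c) (E : Finset (Fin n × Fin n))
    {E' : Finset (Fin n × Fin n)} (hE' : ∀ e ∈ E', e.1 ≠ e.2) (w w' : Fin n × Fin n → ℝ)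
    (μ : Fin n → ℝ) :
    ∑ e ∈ E, (w e : ℂ) • (((1 : ℂ) / 4) • 1 - num n c e.1 * num n c e.2)
        + ∑ j, (μ j : ℂ) • (num n c j - ((1 : ℂ) / 2) • 1)
        + ∑ e ∈ E', (w' e : ℂ) •
            (-((ann n c e.1)ᴴ * ann n c e.2) - (ann n c e.2)ᴴ * ann n c e.1) =
      classicalHamiltonian E w μ (parity (majA n c) (majB n c)) +
        (1 / 2 : ℝ) • quadraticHamiltonian (majA n c) (majB n c) (hoppingMatrix E' w') := by
  rw [classicalHamiltonian, hoppingMatrix, map_neg, map_sum, smul_neg, Finset.smul_sum,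
    ← Finset.sum_neg_distrib]
  refine congrArg₂ _ (congrArg₂ _ (Finset.sum_congr rfl fun e _ => ?_)
    (Finset.sum_congr rfl fun j _ => ?_)) (Finset.sum_congr rfl fun e he => ?_)
  · simp only [num_eq hc, smul_mul_smul_comm, mul_add, add_mul, one_mul, mul_one]
    module
  · rw [num_eq hc]
    module
  · rw [← neg_add', hopping_eq hc (hE' e he), map_smul, map_add, quadraticHamiltonian_single,
      quadraticHamiltonian_single]
    module

end Fock

/-- For a traceless classically interacting fermionic Hamiltonian, there is a
pure fermionic Gaussian state achieving approximation ratio `1/3`. -/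
theorem traceless_CIFH_gaussian_one_third
    (n : ℕ) (hn : 1 ≤ n)
    (c : Fin (2*n) → Matrix (Fin (2^n)) (Fin (2^n)) ℂ) (hc : IsMajorana n c)
    (E E' : Finset (Fin n × Fin n))
    (hE : ∀ e ∈ E, e.1 < e.2) (hE' : ∀ e ∈ E', e.1 < e.2)
    (w : Fin n × Fin n → ℝ) (hw : ∀ e ∈ E, 0 ≤ w e)
    (w' : Fin n × Fin n → ℝ) (μ : Fin n → ℝ)
    (H : Matrix (Fin (2^n)) (Fin (2^n)) ℂ)
    (hH : H = ∑ e ∈ E, (w e : ℂ) • (((1:ℂ)/4) • 1 - num n c e.1 * num n c e.2)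
        + ∑ j, (μ j : ℂ) • (num n c j - ((1:ℂ)/2) • 1)
        + ∑ e ∈ E', (w' e : ℂ) •
            (-((ann n c e.1)ᴴ * ann n c e.2) - (ann n c e.2)ᴴ * ann n c e.1)) :
    ∃ ρ : Matrix (Fin (2^n)) (Fin (2^n)) ℂ,
      IsPureGaussianState n c ρ ∧
      (((1:ℝ)/3 * lamMax H : ℝ) : ℂ) ≤ (ρ * H).trace := by
  have hAB := hc.isMajoranaFamily
  have hE_ne : ∀ e ∈ E, e.1 ≠ e.2 := fun e he => (hE e he).ne
  have hE'_ne : ∀ e ∈ E', e.1 ≠ e.2 := fun e he => (hE' e he).ne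
  rw [hamiltonian_eq hc E hE'_ne] at hH
  obtain ⟨U, t, hU, ht, hle⟩ := exists_lamMax_hamiltonian_le_three_mul_gaussianEnergy (μ := μ) hAB
    hE_ne hw (hoppingMatrix_transpose E' w') (hoppingMatrix_diag hE'_ne w')
  obtain ⟨ρ, hρ, hcov⟩ := exists_isPureGaussianState_hasCovariance hc hU ht
  refine ⟨ρ, hρ, ?_⟩
  rw [trace_mul_comm, hH, hcov.trace_hamiltonian hAB hE_ne, Complex.real_le_real]
  linarith

end
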